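/- Let A and B be real n×n stable matrices. Then the pair (A,B) does NOT have a common quadratic Lyapunov function if and only if there exist nonzero real positive semidefinite symmetric n×n matrices X and Y such that A·X + X·Aᵀ + B·Y + Y·Bᵀ = 0. -/

import Mathlib

open Matrix

/-- A real square matrix is *stable* if every eigenvalue (over ℂ) has negative real part. -/
def IsStable {n : ℕ} (A : Matrix (Fin n) (Fin n) ℝ) : Prop :=
  ∀ μ : ℂ, μ ∈ spectrum ℂ (A.map (algebraMap ℝ ℂ)) → μ.re < 0

/-- `(A,B)` has a common quadratic Lyapunov function: a real symmetric positive definite `P`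
with `P·A + Aᵀ·P` and `P·B + Bᵀ·P` both negative definite. -/
def HasCQLF {n : ℕ} (A B : Matrix (Fin n) (Fin n) ℝ) : Prop :=
  ∃ P : Matrix (Fin n) (Fin n) ℝ,
    P.PosDef ∧ (-(P * A + Aᵀ * P)).PosDef ∧ (-(P * B + Bᵀ * P)).PosDef

open Filter Topology

/-- In a complex Banach algebra, the powers of an element whose spectrum lies in the open unit
disc tend to zero. -/
theorem tendsto_pow_zero_of_spectrum_norm_lt_one {R : Type*} [NormedRing R] [NormedAlgebra ℂ R]
    [CompleteSpace R] (a : R) (h : ∀ z ∈ spectrum ℂ a, ‖z‖ < 1) :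
    Tendsto (fun k : ℕ => a ^ k) atTop (𝓝 0) := by
  have hrad : spectralRadius ℂ a < 1 := by
    rcases (spectrum ℂ a).eq_empty_or_nonempty with he | hne
    · simp [spectralRadius, he]
    · exact_mod_cast spectrum.spectralRadius_lt_of_forall_lt_of_nonempty hne
        (r := 1) (fun z hz => by exact_mod_cast h z hz)
  obtain ⟨r, hr, hr1⟩ := ENNReal.lt_iff_exists_nnreal_btwn.1 hrad
  have hlt := (spectrum.pow_nnnorm_pow_one_div_tendsto_nhds_spectralRadius a).eventually_lt_const hr
  refine squeeze_zero_norm' ?_ (tendsto_pow_atTop_nhds_zero_of_lt_one r.coe_nonneg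
    (by exact_mod_cast hr1))
  filter_upwards [hlt, eventually_gt_atTop 0] with k hk hk0
  have hpow : (‖a ^ k‖₊ : ENNReal) ≤ r ^ k := by
    have := pow_le_pow_left₀ zero_le hk.le k
    rwa [← ENNReal.rpow_natCast, ← ENNReal.rpow_mul, one_div,
      inv_mul_cancel₀ (by exact_mod_cast hk0.ne'), ENNReal.rpow_one] at this
  exact_mod_cast hpow

/-- The Cayley transform `(1 - A)⁻¹ (1 + A)` of a stable matrix has powers tending to zero. -/
theorem IsStable.exists_cayley {n : ℕ} {A : Matrix (Fin n) (Fin n) ℝ} (hA : IsStable A) :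
    IsUnit (1 - A) ∧ ∃ C : Matrix (Fin n) (Fin n) ℝ, (1 - A) * C = 1 + A ∧ C * (1 - A) = 1 + A ∧
      Tendsto (fun k : ℕ => C ^ k) atTop (𝓝 0) := by
  let φ : Matrix (Fin n) (Fin n) ℝ →+* Matrix (Fin n) (Fin n) ℂ := (algebraMap ℝ ℂ).mapMatrix
  have hunit : IsUnit (1 - A) := by
    have h1 : (1 : ℂ) ∉ spectrum ℂ (φ A) := fun h => by
      have := hA 1 h
      norm_num at this
    rw [spectrum.notMem_iff, map_one, ← map_one φ, ← map_sub, Matrix.isUnit_iff_isUnit_det,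
      ← RingHom.map_det, isUnit_iff_ne_zero, map_ne_zero, ← isUnit_iff_ne_zero,
      ← Matrix.isUnit_iff_isUnit_det] at h1
    exact h1
  obtain ⟨u, hu⟩ := hunit
  have hcomm : (1 + A) * (1 - A) = (1 - A) * (1 + A) := by noncomm_ring
  have hleft : (1 - A) * ((↑u⁻¹ : Matrix (Fin n) (Fin n) ℝ) * (1 + A)) = 1 + A := by
    rw [← hu, Units.mul_inv_cancel_left]
  refine ⟨⟨u, hu⟩, (↑u⁻¹ : Matrix (Fin n) (Fin n) ℝ) * (1 + A), hleft, ?_, ?_⟩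
  · rw [mul_assoc, hcomm, ← hu, Units.inv_mul_cancel_left]
  · set C : Matrix (Fin n) (Fin n) ℝ := (↑u⁻¹ : Matrix (Fin n) (Fin n) ℝ) * (1 + A)
    have hspec : ∀ z ∈ spectrum ℂ (φ C), ‖z‖ < 1 := by
      intro z hz
      have hz' : ¬ IsUnit ((z - 1) • (1 : Matrix (Fin n) (Fin n) ℂ) - (z + 1) • φ A) := by
        intro hU
        apply hz
        have hUφ : IsUnit (φ (1 - A)) := (hu ▸ u.isUnit).map φ
        have key : φ (1 - A) * (algebraMap ℂ _ z - φ C) =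
            (z - 1) • (1 : Matrix (Fin n) (Fin n) ℂ) - (z + 1) • φ A := by
          rw [mul_sub, ← map_mul, hleft, Algebra.algebraMap_eq_smul_one, map_sub, map_add, map_one,
            mul_smul_comm, mul_one]
          module
        rw [← key] at hU
        exact (hUφ.unit.isUnit_units_mul _).1 hU
      have hz1 : z + 1 ≠ 0 := by
        intro h0
        apply hz'
        have : z - 1 = -2 := by linear_combination h0
        rw [h0, zero_smul, sub_zero, this, ← Algebra.algebraMap_eq_smul_one]
        exact (isUnit_iff_ne_zero.2 (by norm_num)).map (algebraMap ℂ _)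
      have hmem : (z - 1) / (z + 1) ∈ spectrum ℂ (φ A) := by
        intro hU
        apply hz'
        have : (z - 1) • (1 : Matrix (Fin n) (Fin n) ℂ) - (z + 1) • φ A =
            algebraMap ℂ _ (z + 1) * (algebraMap ℂ _ ((z - 1) / (z + 1)) - φ A) := by
          rw [mul_sub, ← map_mul, mul_div_cancel₀ _ hz1, Algebra.algebraMap_eq_smul_one,
            Algebra.algebraMap_eq_smul_one, smul_mul_assoc, one_mul]
        rw [this]
        exact ((isUnit_iff_ne_zero.2 hz1).map (algebraMap ℂ _)).mul hU
      have hre := hA _ hmem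
      have hpos : 0 < Complex.normSq (z + 1) := Complex.normSq_pos.2 hz1
      rw [Complex.div_re, ← add_div, div_neg_iff] at hre
      have hneg := hre.resolve_left (fun h => absurd h.2 hpos.not_gt)
      have hsq : Complex.normSq z < 1 := by
        have := hneg.1
        simp only [Complex.sub_re, Complex.add_re, Complex.one_re, Complex.sub_im, Complex.add_im,
          Complex.one_im] at this
        rw [Complex.normSq_apply]
        linarith
      rw [Complex.normSq_eq_norm_sq] at hsq
      exact (sq_lt_one_iff₀ (norm_nonneg z)).1 hsq
    have hlim : Tendsto (fun k : ℕ => φ C ^ k) atTop (𝓝 0) := by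
      let _ : NormedRing (Matrix (Fin n) (Fin n) ℂ) := Matrix.linftyOpNormedRing
      let _ : NormedAlgebra ℂ (Matrix (Fin n) (Fin n) ℂ) := Matrix.linftyOpNormedAlgebra
      exact tendsto_pow_zero_of_spectrum_norm_lt_one (φ C) hspec
    have hre : Continuous fun M : Matrix (Fin n) (Fin n) ℂ => M.map Complex.re :=
      continuous_id.matrix_map Complex.continuous_re
    convert (hre.tendsto 0).comp hlim using 2 with k
    · ext i j
      simp only [Function.comp, ← map_pow]
      simp only [φ, RingHom.mapMatrix_apply, Matrix.map_apply, Complex.coe_algebraMap,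
        Complex.ofReal_re]
    · ext i j; simp

/-- If `A` is stable, `A X + X Aᵀ = 0` has only the trivial solution. -/
theorem IsStable.eq_zero_of_mul_add_mul_transpose {n : ℕ} {A X : Matrix (Fin n) (Fin n) ℝ}
    (hA : IsStable A) (h : A * X + X * Aᵀ = 0) : X = 0 := by
  obtain ⟨hu, C, hC, -, hlim⟩ := hA.exists_cayley
  have hut : IsUnit (1 - A)ᵀ := (Matrix.isUnit_transpose _).2 hu
  have hX : C * X * Cᵀ = X := by
    apply hu.mul_left_cancel
    apply hut.mul_right_cancel
    calc (1 - A) * (C * X * Cᵀ) * (1 - A)ᵀ = ((1 - A) * C) * X * ((1 - A) * C)ᵀ := by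
          simp only [Matrix.transpose_mul, mul_assoc]
      _ = (1 - A) * X * (1 - A)ᵀ + 2 • (A * X + X * Aᵀ) := by
          rw [hC, Matrix.transpose_add, Matrix.transpose_sub, Matrix.transpose_one]
          noncomm_ring
      _ = (1 - A) * X * (1 - A)ᵀ := by rw [h, smul_zero, add_zero]
  have hpow : ∀ k : ℕ, C ^ k * X * (C ^ k)ᵀ = X := by
    intro k
    induction k with
    | zero => simp
    | succ k ih =>
      calc C ^ (k + 1) * X * (C ^ (k + 1))ᵀ = C ^ k * (C * X * Cᵀ) * (C ^ k)ᵀ := by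
            simp only [pow_succ, Matrix.transpose_mul, mul_assoc]
        _ = X := by rw [hX, ih]
  have hT : Tendsto (fun k : ℕ => C ^ k * X * (C ^ k)ᵀ) atTop (𝓝 0) := by
    have hc : Continuous fun M : Matrix (Fin n) (Fin n) ℝ => M * X * Mᵀ := by fun_prop
    have h0 := (hc.tendsto 0).comp hlim
    rwa [zero_mul, zero_mul] at h0
  simp only [hpow] at hT
  exact tendsto_nhds_unique tendsto_const_nhds hT

/-- Lyapunov's theorem: for stable `A`, a symmetric `P` with `P A + Aᵀ P` negative definite is
positive definite. -/
theorem IsStable.posDef_of_lyapunov {n : ℕ} {A P : Matrix (Fin n) (Fin n) ℝ}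
    (hA : IsStable A) (hP : P.IsHermitian) (h : (-(P * A + Aᵀ * P)).PosDef) : P.PosDef := by
  obtain ⟨⟨u, hu⟩, C, -, hC, hlim⟩ := hA.exists_cayley
  have hdec : ∀ x ≠ 0, (C *ᵥ x) ⬝ᵥ P *ᵥ (C *ᵥ x) < x ⬝ᵥ P *ᵥ x := by
    intro x hx
    set y := (↑u⁻¹ : Matrix (Fin n) (Fin n) ℝ) *ᵥ x with hy
    have hxy : x = (1 - A) *ᵥ y := by rw [hy, ← hu, Matrix.mulVec_mulVec]; simp
    have hCxy : C *ᵥ x = (1 + A) *ᵥ y := by rw [hxy, Matrix.mulVec_mulVec, hC]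
    have hy0 : y ≠ 0 := by
      intro h0
      rw [h0, Matrix.mulVec_zero] at hxy
      exact hx hxy
    have hq := h.dotProduct_mulVec_pos hy0
    have hAt : y ⬝ᵥ Aᵀ *ᵥ P *ᵥ y = (A *ᵥ y) ⬝ᵥ P *ᵥ y := by
      rw [Matrix.dotProduct_mulVec, Matrix.vecMul_transpose]
    rw [hCxy, hxy]
    simp only [star_trivial, Matrix.neg_mulVec, Matrix.add_mulVec, Matrix.sub_mulVec,
      Matrix.one_mulVec, dotProduct_neg, dotProduct_add, ← Matrix.mulVec_mulVec, hAt,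
      add_dotProduct, sub_dotProduct, dotProduct_sub, Matrix.mulVec_add, Matrix.mulVec_sub] at hq ⊢
    linarith
  refine Matrix.PosDef.of_dotProduct_mulVec_pos hP fun x hx => ?_
  let V : ℕ → ℝ := fun k => (C ^ k *ᵥ x) ⬝ᵥ P *ᵥ (C ^ k *ᵥ x)
  have hanti : Antitone V := antitone_nat_of_succ_le fun k => by
    simp only [V, pow_succ', ← Matrix.mulVec_mulVec]
    by_cases h0 : C ^ k *ᵥ x = 0
    · simp [h0]
    · exact (hdec _ h0).le
  have hV : Tendsto V atTop (𝓝 0) := by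
    have hc : Continuous fun M : Matrix (Fin n) (Fin n) ℝ => (M *ᵥ x) ⬝ᵥ P *ᵥ (M *ᵥ x) := by
      fun_prop
    have h0 := (hc.tendsto 0).comp hlim
    rwa [Matrix.zero_mulVec, zero_dotProduct] at h0
  have h1 := hanti.le_of_tendsto hV 1
  simp only [V, pow_one] at h1
  simpa using h1.trans_lt (hdec x hx)

theorem Matrix.trace_mul_vecMulVec_self {ι : Type*} [Fintype ι] (Q : Matrix ι ι ℝ) (x : ι → ℝ) :
    (Q * vecMulVec x x).trace = x ⬝ᵥ Q *ᵥ x := by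
  rw [Matrix.mul_vecMulVec, Matrix.trace_vecMulVec, dotProduct_comm]

/-- The trace pairing of a positive definite matrix with a nonzero positive semidefinite one is
positive. -/
theorem Matrix.PosDef.trace_mul_pos {ι : Type*} [Fintype ι] {Q X : Matrix ι ι ℝ}
    (hQ : Q.PosDef) (hX : X.PosSemidef) (hX0 : X ≠ 0) : 0 < (Q * X).trace := by
  obtain ⟨m, v, rfl⟩ := Matrix.posSemidef_iff_eq_sum_vecMulVec.1 hX
  have hv : ∃ i, v i ≠ 0 := by
    by_contra! h
    simp [h] at hX0
  obtain ⟨i, hi⟩ := hv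
  simp only [Matrix.mul_sum, Matrix.trace_sum, star_trivial, Matrix.trace_mul_vecMulVec_self]
  exact Finset.sum_pos' (fun j _ => by simpa using hQ.posSemidef.dotProduct_mulVec_nonneg (v j))
    ⟨i, Finset.mem_univ i, by simpa using hQ.dotProduct_mulVec_pos hi⟩

theorem Matrix.PosSemidef.abs_apply_le_trace {ι : Type*} [Fintype ι] [DecidableEq ι]
    {X : Matrix ι ι ℝ} (hX : X.PosSemidef) (i j : ι) : |X i j| ≤ X.trace := by
  have hdiag : ∀ k, X k k ≤ X.trace := fun k =>
    Finset.single_le_sum (f := fun k => X k k) (fun k _ => hX.diag_nonneg) (Finset.mem_univ k)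
  have hsymm : X j i = X i j := by simpa using hX.1.apply i j
  have hadd := hX.dotProduct_mulVec_nonneg (Pi.single i 1 + Pi.single j 1)
  have hsub := hX.dotProduct_mulVec_nonneg (Pi.single i 1 - Pi.single j 1)
  simp only [star_trivial, Matrix.mulVec_add, Matrix.mulVec_sub, add_dotProduct, sub_dotProduct,
    dotProduct_add, dotProduct_sub, single_dotProduct, Matrix.mulVec_single_one, Matrix.col_apply,
    one_mul, hsymm] at hadd hsub
  have hi := hdiag i
  have hj := hdiag j
  rw [abs_le]
  constructor <;> linarith

theorem Matrix.isClosed_setOf_posSemidef (ι : Type*) [Fintype ι] :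
    IsClosed {X : Matrix ι ι ℝ | X.PosSemidef} := by
  simp only [Matrix.posSemidef_iff_dotProduct_mulVec, Matrix.IsHermitian, Set.ofPred_and,
    Set.ofPred_forall]
  refine (isClosed_eq (by fun_prop) (by fun_prop)).inter (isClosed_iInter fun x => ?_)
  exact isClosed_le (by fun_prop) (by fun_prop)

/-- The compact convex base of the product of two positive semidefinite cones. -/
def posSemidefPairBase (ι : Type*) [Fintype ι] : Set (Matrix ι ι ℝ × Matrix ι ι ℝ) :=
  {p | p.1.PosSemidef ∧ p.2.PosSemidef ∧ p.1.trace + p.2.trace = 1}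

theorem convex_posSemidefPairBase (ι : Type*) [Fintype ι] : Convex ℝ (posSemidefPairBase ι) := by
  rintro p ⟨hp1, hp2, hp⟩ q ⟨hq1, hq2, hq⟩ a b ha hb hab
  refine ⟨(hp1.smul ha).add (hq1.smul hb), (hp2.smul ha).add (hq2.smul hb), ?_⟩
  simp only [Prod.fst_add, Prod.snd_add, Prod.smul_fst, Prod.smul_snd, Matrix.trace_add,
    Matrix.trace_smul, smul_eq_mul]
  linear_combination a * hp + b * hq + hab

theorem isCompact_posSemidefPairBase (ι : Type*) [Fintype ι] :
    IsCompact (posSemidefPairBase ι) := by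
  classical
  let S : Set (Matrix ι ι ℝ) := Set.univ.pi fun _ => Set.univ.pi fun _ => Set.Icc (-1) 1
  have hS : IsCompact S := isCompact_univ_pi fun _ => isCompact_univ_pi fun _ => isCompact_Icc
  refine (hS.prod hS).of_isClosed_subset ?_ ?_
  · have hcl := Matrix.isClosed_setOf_posSemidef ι
    exact (hcl.preimage continuous_fst).inter ((hcl.preimage continuous_snd).inter
      (isClosed_eq (by fun_prop) (by fun_prop)))
  · rintro p ⟨h1, h2, h⟩
    have ht1 := h1.trace_nonneg
    have ht2 := h2.trace_nonneg
    exact ⟨fun i _ j _ => abs_le.1 ((h1.abs_apply_le_trace i j).trans (by linarith)),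
      fun i _ j _ => abs_le.1 ((h2.abs_apply_le_trace i j).trans (by linarith))⟩

/-- On symmetric matrices every linear functional is a trace pairing with a symmetric matrix. -/
theorem Matrix.exists_isHermitian_forall_eq_trace_mul {ι : Type*} [Fintype ι] [DecidableEq ι]
    (f : Matrix ι ι ℝ →ₗ[ℝ] ℝ) :
    ∃ P : Matrix ι ι ℝ, P.IsHermitian ∧ ∀ M, Mᵀ = M → f M = (P * M).trace := by
  let G : Matrix ι ι ℝ := Matrix.of fun i j => f (Matrix.single j i 1)
  have hG : ∀ M, f M = (G * M).trace := by
    intro M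
    conv_lhs => rw [Matrix.matrix_eq_sum_single M]
    simp only [map_sum, Matrix.trace, Matrix.diag, Matrix.mul_apply, G, Matrix.of_apply]
    rw [Finset.sum_comm]
    refine Finset.sum_congr rfl fun i _ => Finset.sum_congr rfl fun j _ => ?_
    rw [← mul_one (M j i), ← smul_eq_mul, ← Matrix.smul_single, map_smul, smul_eq_mul, smul_eq_mul,
      mul_one, mul_comm]
  refine ⟨(2⁻¹ : ℝ) • (G + Gᵀ), ?_, fun M hM => ?_⟩
  · simp [Matrix.IsHermitian, Matrix.conjTranspose_eq_transpose_of_trivial, add_comm]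
  · have ht : (Gᵀ * M).trace = (G * M).trace := by
      rw [← Matrix.trace_transpose, Matrix.transpose_mul, Matrix.transpose_transpose, hM,
        Matrix.trace_mul_comm]
    rw [hG, Matrix.smul_mul, Matrix.trace_smul, add_mul, Matrix.trace_add, ht, smul_eq_mul]
    ring

theorem Matrix.trace_mul_lyapunov {ι : Type*} [Fintype ι] (P A X : Matrix ι ι ℝ) :
    (P * (A * X + X * Aᵀ)).trace = ((P * A + Aᵀ * P) * X).trace := by
  rw [mul_add, add_mul, Matrix.trace_add, Matrix.trace_add, ← mul_assoc, ← mul_assoc,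
    Matrix.trace_mul_comm (P * X), mul_assoc Aᵀ]

/-- A symmetric `P` whose trace pairing with the Lyapunov image of every trace-one positive
semidefinite matrix is negative makes `P A + Aᵀ P` negative definite. -/
theorem Matrix.posDef_neg_lyapunov {ι : Type*} [Fintype ι] {P A : Matrix ι ι ℝ}
    (hP : P.IsHermitian)
    (h : ∀ X : Matrix ι ι ℝ, X.PosSemidef → X.trace = 1 → (P * (A * X + X * Aᵀ)).trace < 0) :
    (-(P * A + Aᵀ * P)).PosDef := by
  have hPt : Pᵀ = P := by simpa [Matrix.conjTranspose_eq_transpose_of_trivial] using hP.eq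
  refine Matrix.PosDef.of_dotProduct_mulVec_pos ?_ fun x hx => ?_
  · simp [Matrix.IsHermitian, Matrix.conjTranspose_eq_transpose_of_trivial, hPt, add_comm]
  · have hxx : 0 < x ⬝ᵥ x := by simpa using dotProduct_star_self_pos_iff.2 hx
    have hneg := h ((x ⬝ᵥ x)⁻¹ • vecMulVec x x)
      (by simpa using (Matrix.posSemidef_vecMulVec_self_star x).smul (inv_nonneg.2 hxx.le))
      (by rw [Matrix.trace_smul, Matrix.trace_vecMulVec, smul_eq_mul, inv_mul_cancel₀ hxx.ne'])
    rw [Matrix.trace_mul_lyapunov, Matrix.mul_smul, Matrix.trace_smul,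
      Matrix.trace_mul_vecMulVec_self, smul_eq_mul] at hneg
    rw [star_trivial, Matrix.neg_mulVec, dotProduct_neg, neg_pos]
    exact (pos_iff_neg_of_mul_neg hneg).1 (inv_pos.2 hxx)

/-- For stable `A`, `B`, the pair has no CQLF iff there are nonzero positive semidefinite
`X`, `Y` with `A·X + X·Aᵀ + B·Y + Y·Bᵀ = 0`. -/
theorem no_CQLF_iff_cones_intersect {n : ℕ} (A B : Matrix (Fin n) (Fin n) ℝ)
    (hA : IsStable A) (hB : IsStable B) :
    ¬ HasCQLF A B ↔
      ∃ X Y : Matrix (Fin n) (Fin n) ℝ, X ≠ 0 ∧ Y ≠ 0 ∧ X.PosSemidef ∧ Y.PosSemidef ∧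
        A * X + X * Aᵀ + B * Y + Y * Bᵀ = 0 := by
  constructor
  · intro hno
    let L : Matrix (Fin n) (Fin n) ℝ × Matrix (Fin n) (Fin n) ℝ →ₗ[ℝ] Matrix (Fin n) (Fin n) ℝ :=
      { toFun := fun p => (A * p.1 + p.1 * Aᵀ) + (B * p.2 + p.2 * Bᵀ)
        map_add' := fun p q => by simp only [Prod.fst_add, Prod.snd_add]; noncomm_ring
        map_smul' := fun c p => by simp [smul_add] }
    have hL : Continuous L := by
      change Continuous fun p : Matrix (Fin n) (Fin n) ℝ × Matrix (Fin n) (Fin n) ℝ =>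
        (A * p.1 + p.1 * Aᵀ) + (B * p.2 + p.2 * Bᵀ)
      fun_prop
    by_cases h0 : (0 : Matrix (Fin n) (Fin n) ℝ) ∈ L '' posSemidefPairBase (Fin n)
    · obtain ⟨⟨X, Y⟩, ⟨hX, hY, htr⟩, hXY⟩ := h0
      change (A * X + X * Aᵀ) + (B * Y + Y * Bᵀ) = 0 at hXY
      change X.trace + Y.trace = 1 at htr
      refine ⟨X, Y, ?_, ?_, hX, hY, by rw [← hXY]; abel⟩
      · rintro rfl
        have hY0 : Y = 0 := hB.eq_zero_of_mul_add_mul_transpose (by simpa using hXY)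
        simp [hY0] at htr
      · rintro rfl
        have hX0 : X = 0 := hA.eq_zero_of_mul_add_mul_transpose (by simpa using hXY)
        simp [hX0] at htr
    · exfalso
      apply hno
      have hsep : ∃ f : Matrix (Fin n) (Fin n) ℝ →ₗ[ℝ] ℝ,
          ∀ p ∈ posSemidefPairBase (Fin n), f (L p) < 0 := by
        have : LocallyConvexSpace ℝ (Matrix (Fin n) (Fin n) ℝ) :=
          inferInstanceAs (LocallyConvexSpace ℝ (Fin n → Fin n → ℝ))
        obtain ⟨f, u, hf, hu⟩ := geometric_hahn_banach_closed_point
          ((convex_posSemidefPairBase (Fin n)).linear_image L)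
          ((isCompact_posSemidefPairBase (Fin n)).image hL).isClosed h0
        rw [map_zero] at hu
        exact ⟨f.toLinearMap, fun p hp => (hf _ ⟨p, hp, rfl⟩).trans hu⟩
      obtain ⟨f, hf⟩ := hsep
      obtain ⟨P, hP, hPf⟩ := Matrix.exists_isHermitian_forall_eq_trace_mul f
      have hsymm : ∀ M X : Matrix (Fin n) (Fin n) ℝ, X.PosSemidef →
          (M * X + X * Mᵀ)ᵀ = M * X + X * Mᵀ := by
        intro M X hX
        have hXt : Xᵀ = X := by
          simpa [Matrix.conjTranspose_eq_transpose_of_trivial] using hX.1.eq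
        simp [hXt, add_comm]
      have hPA : (-(P * A + Aᵀ * P)).PosDef := Matrix.posDef_neg_lyapunov hP fun X hX htr => by
        have := hf (X, 0) ⟨hX, .zero, by simpa using htr⟩
        rw [← hPf _ (hsymm A X hX)]
        simpa [L] using this
      have hPB : (-(P * B + Bᵀ * P)).PosDef := Matrix.posDef_neg_lyapunov hP fun Y hY htr => by
        have := hf (0, Y) ⟨.zero, hY, by simpa using htr⟩
        rw [← hPf _ (hsymm B Y hY)]
        simpa [L] using this
      exact ⟨P, hA.posDef_of_lyapunov hP hPA, hPA, hPB⟩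
  · rintro ⟨X, Y, hX0, hY0, hX, hY, hXY⟩ ⟨P, -, hPA, hPB⟩
    have h1 := hPA.trace_mul_pos hX hX0
    have h2 := hPB.trace_mul_pos hY hY0
    have h3 : (P * ((A * X + X * Aᵀ) + (B * Y + Y * Bᵀ))).trace = 0 := by
      rw [← add_assoc, hXY, mul_zero, Matrix.trace_zero]
    rw [mul_add, Matrix.trace_add, Matrix.trace_mul_lyapunov, Matrix.trace_mul_lyapunov] at h3
    rw [neg_mul, Matrix.trace_neg] at h1 h2
    linarith
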